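/- arXiv:1504.02828 — 2 statements merged into one kernel-verified Lean document; each statement's English description precedes it below -/
import Mathlib

section
/- Let λ be a k-strict partition of length r with characteristic index χ, and let r' be the smallest even integer with r' ≥ r (set λ_{r'} = 0 and d^I_{r'} = 0 when r is odd). Then in the field of rational functions ℚ(β, t_1, …, t_r): t_1^{λ_1} ⋯ t_r^{λ_r} · ∏_{(i,j)∈Δ_r}(1 − t̄_i/t̄_j) / ∏_{(i,j)∈C(λ)}(1 − t_i/t̄_j) = Σ_{I ⊂ D(λ)_r} Pf( Λ^I_{i,j} )_{1≤i<j≤r'}, where Λ^I_{i,j} := t_i^{λ_i+d_i^I} · t_j^{λ_j+d_j^I} · F^I_{i,j}(t) for 1 ≤ i < j ≤ r, and, when r is odd (so r' = r+1), Λ^I_{i,r+1} := t_i^{λ_i+d_i^I} · F^I_i(t) for 1 ≤ i ≤ r. -/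
open MvPolynomial

namespace Stmt7

/-- The field of rational functions `ℚ(β, t_1, …, t_r)`. -/
abbrev K (r : ℕ) := FractionRing (MvPolynomial (Option (Fin r)) ℚ)

noncomputable def β (r : ℕ) : K r :=
  algebraMap (MvPolynomial (Option (Fin r)) ℚ) (K r) (X none)

noncomputable def t {r : ℕ} (i : Fin r) : K r :=
  algebraMap (MvPolynomial (Option (Fin r)) ℚ) (K r) (X (some i))

/-- `t_i` for `ℕ`-indices (`0` beyond `r`). -/
noncomputable def tN (r : ℕ) (i : ℕ) : K r := if h : i < r then t ⟨i, h⟩ else 0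

/-- `t̄ = -t/(1+βt)`. -/
noncomputable def tbar {r : ℕ} (i : Fin r) : K r := -t i / (1 + β r * t i)

noncomputable def tbarN (r : ℕ) (i : ℕ) : K r := -tN r i / (1 + β r * tN r i)

/-- `λ_i` for `ℕ`-indices (`0` beyond `r`). -/
def lamN {r : ℕ} (lam : Fin r → ℕ) (i : ℕ) : ℕ := if h : i < r then lam ⟨i, h⟩ else 0

/-- The characteristic index `χ_j = #{i<j : λ_i+λ_j > 2k+j-i} + λ_j - k - j`
(`0`-indexed `j`; positions are `1`-indexed as in the paper). -/
def chi {r : ℕ} (k : ℕ) (lam : Fin r → ℕ) (j : Fin r) : ℤ :=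
  ((Finset.univ.filter fun i : Fin r =>
      i < j ∧ 2 * (k : ℤ) + ((j : ℕ) : ℤ) - ((i : ℕ) : ℤ) < (lam i : ℤ) + (lam j : ℤ)).card : ℤ)
    + (lam j : ℤ) - (k : ℤ) - ((j : ℕ) + 1 : ℕ)

/-- `Δ_r = {(i,j) : i < j}`. -/
def Delta (r : ℕ) : Finset (Fin r × Fin r) :=
  Finset.univ.filter fun p : Fin r × Fin r => p.1 < p.2

/-- `C(λ) = {(i,j) ∈ Δ_r : χ_i + χ_j ≥ 0}`. -/
def Cset {r : ℕ} (k : ℕ) (lam : Fin r → ℕ) : Finset (Fin r × Fin r) :=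
  (Delta r).filter fun p => 0 ≤ chi k lam p.1 + chi k lam p.2

/-- `D(λ)_r = {(i,j) ∈ Δ_r : χ_i + χ_j < 0}`. -/
def Dset {r : ℕ} (k : ℕ) (lam : Fin r → ℕ) : Finset (Fin r × Fin r) :=
  (Delta r).filter fun p => chi k lam p.1 + chi k lam p.2 < 0

/-- `a_i^I = #{j : (i,j) ∈ I}` (`ℕ`-indexed). -/
def aI {r : ℕ} (I : Finset (Fin r × Fin r)) (i : ℕ) : ℕ :=
  (I.filter fun p => ((p.1 : ℕ) = i)).card

/-- `c_i^I = #{j : (j,i) ∈ I}` (`ℕ`-indexed). -/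
def cI {r : ℕ} (I : Finset (Fin r × Fin r)) (i : ℕ) : ℕ :=
  (I.filter fun p => ((p.2 : ℕ) = i)).card

/-- `d_i^I = a_i^I - c_i^I`. -/
def dI {r : ℕ} (I : Finset (Fin r × Fin r)) (i : ℕ) : ℤ := (aI I i : ℤ) - (cI I i : ℤ)

/-- The rational function `F^I_{i,j}(t)` (`0`-indexed `i < j`, `r'` even). -/
noncomputable def F {r : ℕ} (r' : ℕ) (I : Finset (Fin r × Fin r)) (i j : ℕ) : K r :=
  (1 + β r * tN r i) ^ ((i : ℤ) + (cI I i : ℤ) + 2 - (r' : ℤ)) *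
    (1 + β r * tN r j) ^ ((j : ℤ) + (cI I j : ℤ) + 1 - (r' : ℤ)) *
    ((1 - tbarN r i / tbarN r j) / (1 - tN r i / tbarN r j))

/-- The rational function `F^I_i(t)`. -/
noncomputable def Fi {r : ℕ} (r' : ℕ) (I : Finset (Fin r × Fin r)) (i : ℕ) : K r :=
  (1 + β r * tN r i) ^ ((i : ℤ) + (cI I i : ℤ) + 2 - (r' : ℤ))

/-- The Pfaffian entry `Λ^I_{i,j}`, where the last column is the special one when `r` is
odd (i.e. when `j = r' - 1 = r`). -/
noncomputable def Lam {r : ℕ} (r' : ℕ) (lam : Fin r → ℕ) (I : Finset (Fin r × Fin r))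
    (i j : ℕ) : K r :=
  if j < r then
    tN r i ^ ((lamN lam i : ℤ) + dI I i) * tN r j ^ ((lamN lam j : ℤ) + dI I j) *
      F r' I i j
  else tN r i ^ ((lamN lam i : ℤ) + dI I i) * Fi r' I i

/-- The skew-symmetric matrix determined by its above-diagonal entries. -/
def skew {N : ℕ} {K : Type*} [Field K] (f : Fin N → Fin N → K) : Fin N → Fin N → K :=
  fun i j => if i < j then f i j else if j < i then -f j i else 0

/-- The Pfaffian of a `2n × 2n` skew-symmetric matrix, via
`Pf(A) = (2^n n!)⁻¹ Σ_{σ ∈ S_{2n}} sgn(σ) ∏_{i=1}^{n} A_{σ(2i-1), σ(2i)}`. -/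
noncomputable def pf {K : Type*} [Field K] (n : ℕ) (A : Fin (2 * n) → Fin (2 * n) → K) :
    K :=
  (((2 ^ n * n.factorial : ℕ) : K))⁻¹ *
    ∑ σ : Equiv.Perm (Fin (2 * n)),
      ((Equiv.Perm.sign σ : ℤ) : K) *
        ∏ i : Fin n,
          A (σ ⟨2 * (i : ℕ), by have := i.isLt; omega⟩)
            (σ ⟨2 * (i : ℕ) + 1, by have := i.isLt; omega⟩)


/-- The Schur kernel. -/
noncomputable def S {K : Type*} [Field K] (z w : K) : K := (w - z) / (w + z)

lemma S_antisymm {K : Type*} [Field K] (z w : K) : S z w = - S w z := by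
  unfold S; rw [← neg_sub z w, neg_div, add_comm]

lemma lagr {K : Type*} [Field K] {m : ℕ} (hm : Odd m) (x : Fin m → K)
    (hinj : Function.Injective x) (y : K) :
    ∏ c, (y + x c) - ∏ c, (y - x c) =
      ∑ b, 2 * x b * ∏ c ∈ Finset.univ.erase b, ((x b + x c) / (x b - x c) * -(y + x c)) := by
  classical
  set p : Polynomial K := ∏ c, (Polynomial.X - Polynomial.C (-x c)) with hp
  set q : Polynomial K := ∏ c, (Polynomial.X - Polynomial.C (x c)) with hq
  have hpm : p.Monic := Polynomial.monic_prod_X_sub_C _ _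
  have hqm : q.Monic := Polynomial.monic_prod_X_sub_C _ _
  have hpd : p.degree = m := by
    rw [hp, Polynomial.degree_prod]; simp only [Polynomial.degree_X_sub_C]; simp
  have hqd : q.degree = m := by
    rw [hq, Polynomial.degree_prod]; simp only [Polynomial.degree_X_sub_C]; simp
  have hd : (p - q).degree < (Finset.univ : Finset (Fin m)).card := by
    have := Polynomial.degree_sub_lt_left (p := p) (q := q) (hpd.trans hqd.symm) hpm.ne_zero
      (by rw [hpm.leadingCoeff, hqm.leadingCoeff])
    rw [hpd] at this
    simpa using this
  have h := Lagrange.eq_interpolate (v := x) (s := Finset.univ) (hinj.injOn) hd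
  have h2 := congrArg (Polynomial.eval (-y)) h
  rw [Lagrange.interpolate_apply] at h2
  simp only [hp, hq, Lagrange.basis, Lagrange.basisDivisor, Polynomial.eval_sub, Polynomial.eval_prod,
    Polynomial.eval_finsetSum, Polynomial.eval_mul, Polynomial.eval_C, Polynomial.eval_X, sub_neg_eq_add] at h2
  have e1 : ∏ c, (-y + x c) = - ∏ c, (y - x c) := by
    have : ∀ c, -y + x c = -(y - x c) := fun c => by ring
    simp only [this, Finset.prod_neg]; simp [hm.neg_one_pow]
  have e2 : ∏ c, (-y - x c) = - ∏ c, (y + x c) := by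
    have : ∀ c, -y - x c = -(y + x c) := fun c => by ring
    simp only [this, Finset.prod_neg]; simp [hm.neg_one_pow]
  rw [e1, e2] at h2
  have : ∏ c, (y + x c) - ∏ c, (y - x c) = -∏ c, (y - x c) - -∏ c, (y + x c) := by ring
  rw [this, h2]
  refine Finset.sum_congr rfl fun b _ => ?_
  rw [Finset.prod_eq_zero (f := fun c => x b - x c) (Finset.mem_univ b) (sub_self (x b)), sub_zero,
    ← Finset.mul_prod_erase _ _ (Finset.mem_univ b), ← two_mul, mul_assoc, ← Finset.prod_mul_distrib]
  congr 1
  refine Finset.prod_congr rfl fun c _ => ?_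
  ring

lemma row_id {K : Type*} [Field K] [CharZero K] {m : ℕ} (hm : Odd m) (x : Fin m → K)
    (hinj : Function.Injective x) (y : K) (hx0 : ∀ i, x i ≠ 0) (hy : ∀ i, y + x i ≠ 0)
    (hy' : ∀ i, y - x i ≠ 0) :
    ∑ b, ∏ c ∈ Finset.univ.erase b, ((S y (x c))⁻¹ * (S (x b) (x c))⁻¹) = 1 := by
  classical
  set T : Fin m → K := fun b => ∏ c ∈ Finset.univ.erase b, (S (x b) (x c))⁻¹ with hT
  have card : ∀ b : Fin m, Even ((Finset.univ.erase b).card) := fun b => by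
    simp; exact Nat.Odd.sub_odd hm odd_one
  have key : ∀ y : K, (∀ i, y + x i ≠ 0) →
      ∏ c, (y + x c) - ∏ c, (y - x c) =
        (∏ c, (y + x c)) * ∑ b, 2 * x b / (y + x b) * T b := by
    intro y hy
    rw [lagr hm x hinj y, Finset.mul_sum]
    refine Finset.sum_congr rfl fun b _ => ?_
    rw [Finset.prod_mul_distrib, Finset.prod_neg, (card b).neg_one_pow, one_mul,
      ← Finset.mul_prod_erase _ _ (Finset.mem_univ b)]
    have : ∏ c ∈ Finset.univ.erase b, (x b + x c) / (x b - x c) = T b := by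
      have e : ∀ c, (x b + x c) / (x b - x c) = -(S (x b) (x c))⁻¹ := fun c => by
        unfold S; rw [inv_div, ← neg_sub (x c) (x b), div_neg, add_comm]
      simp only [e, hT]
      rw [Finset.prod_neg, (card b).neg_one_pow, one_mul]
    rw [this]
    have := hy b
    field_simp
  have hT1 : ∑ b, T b = 1 := by
    have h := key 0 (by simpa using hx0)
    have e : ∀ b, 2 * x b / (0 + x b) * T b = 2 * T b := fun b => by
      have := hx0 b
      rw [zero_add, mul_div_assoc, div_self this, mul_one]
    simp only [e, ← Finset.mul_sum] at h
    simp only [zero_add, zero_sub, Finset.prod_neg] at h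
    have hP : ∏ c, x c ≠ 0 := Finset.prod_ne_zero_iff.2 fun c _ => hx0 c
    simp only [Finset.card_univ, Fintype.card_fin, hm.neg_one_pow] at h
    have : (∏ c, x c) * (2 * (∑ b, T b - 1)) = 0 := by linear_combination -h
    rcases mul_eq_zero.1 this with h | h
    · exact absurd h hP
    · rcases mul_eq_zero.1 h with h | h
      · norm_num at h
      · linear_combination h
  have hA : ∏ c, (y + x c) ≠ 0 := Finset.prod_ne_zero_iff.2 fun c _ => hy c
  have hB : ∏ c, (y - x c) ≠ 0 := Finset.prod_ne_zero_iff.2 fun c _ => hy' c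
  have hS : ∑ b, -S y (x b) * T b = ∏ c, (y - x c) / (y + x c) := by
    have h := key y hy
    have e : ∀ b, -S y (x b) * T b = T b - 2 * x b / (y + x b) * T b := fun b => by
      have := hy b
      have h2 : x b + y ≠ 0 := by rwa [add_comm]
      unfold S; field_simp; ring
    simp only [e, Finset.sum_sub_distrib, hT1, Finset.prod_div_distrib]
    rw [eq_div_iff hA]
    linear_combination h
  have hS' : ∏ c, (y - x c) / (y + x c) = - ∏ c, S y (x c) := by
    have e : ∀ c, (y - x c) / (y + x c) = - S y (x c) := fun c => by
      unfold S; rw [← neg_sub (x c) y, neg_div, add_comm]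
    simp only [e]; rw [Finset.prod_neg]; simp [hm.neg_one_pow]
  have hS0 : ∀ c, S y (x c) ≠ 0 := fun c => by
    unfold S; refine div_ne_zero ?_ ?_
    · rw [← neg_sub]; exact neg_ne_zero.2 (hy' c)
    · rw [add_comm]; exact hy c
  have hP : ∏ c, S y (x c) ≠ 0 := Finset.prod_ne_zero_iff.2 fun c _ => hS0 c
  have fin : (∏ c, S y (x c)) *
      ∑ b, ∏ c ∈ Finset.univ.erase b, ((S y (x c))⁻¹ * (S (x b) (x c))⁻¹) = ∏ c, S y (x c) := by
    have h := hS.trans hS'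
    simp only [neg_mul, Finset.sum_neg_distrib, neg_inj] at h
    conv_rhs => rw [← h]
    rw [Finset.mul_sum]
    refine Finset.sum_congr rfl fun b _ => ?_
    rw [Finset.prod_mul_distrib, ← Finset.mul_prod_erase _ _ (Finset.mem_univ b),
      Finset.prod_inv_distrib]
    have : ∏ c ∈ Finset.univ.erase b, S y (x c) ≠ 0 :=
      Finset.prod_ne_zero_iff.2 fun c _ => hS0 c
    change _ = S y (x b) * ∏ c ∈ Finset.univ.erase b, (S (x b) (x c))⁻¹
    rw [← mul_assoc, mul_assoc (S y (x b)), mul_inv_cancel₀ this, mul_one]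
  exact mul_left_cancel₀ hP (by rw [fin, mul_one])

/-- Remove the entry `p`. -/
def del {K : Type*} {m : ℕ} (x : Fin (m + 1) → K) (p : Fin (m + 1)) : Fin m → K :=
  fun i => x (Equiv.swap 0 p i.succ)

lemma del_inj {m : ℕ} (p : Fin (m + 1)) :
    Function.Injective (fun i : Fin m => Equiv.swap 0 p i.succ) :=
  (Equiv.injective _).comp (Fin.succ_injective _)

lemma del_ne {m : ℕ} (p : Fin (m + 1)) (i : Fin m) : Equiv.swap 0 p i.succ ≠ p := by
  intro h
  have : Equiv.swap 0 p i.succ = Equiv.swap 0 p 0 := by rw [h, Equiv.swap_apply_left]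
  exact Fin.succ_ne_zero i ((Equiv.injective _) this)

lemma prod_erase_del {K : Type*} [Field K] {m : ℕ} (f : Fin (m + 1) → K) (q : Fin (m + 1)) :
    ∏ c ∈ Finset.univ.erase q, f c = ∏ i : Fin m, f (Equiv.swap 0 q i.succ) := by
  classical
  have : Finset.univ.erase q =
      Finset.univ.image (fun i : Fin m => Equiv.swap 0 q i.succ) := by
    symm
    apply Finset.eq_of_subset_of_card_le
    · intro c hc
      simp only [Finset.mem_image, Finset.mem_univ, true_and] at hc
      obtain ⟨i, rfl⟩ := hc
      simp only [Finset.mem_erase, Finset.mem_univ, and_true]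
      exact del_ne q i
    · rw [Finset.card_image_of_injective _ (del_inj q)]
      simp
  rw [this, Finset.prod_image (fun a _ b _ h => del_inj q h)]

lemma sum_perm_succ {K : Type*} [Field K] {m : ℕ} (h : (Fin (m + 1) → K) → K)
    (x : Fin (m + 1) → K) :
    ∑ σ : Equiv.Perm (Fin (m + 1)), h (x ∘ σ) =
      ∑ p, ∑ τ : Equiv.Perm (Fin m), h (Fin.cons (x p) (del x p ∘ τ)) := by
  rw [← Equiv.sum_comp Equiv.Perm.decomposeFin.symm, Fintype.sum_prod_type]
  refine Finset.sum_congr rfl fun p _ => Finset.sum_congr rfl fun τ _ => ?_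
  congr 1
  funext i
  refine Fin.cases ?_ (fun i => ?_) i
  · simp
  · simp [del]

/-- The product of all Schur kernels. -/
noncomputable def V {K : Type*} [Field K] {m : ℕ} (x : Fin m → K) : K :=
  ∏ i, ∏ j ∈ Finset.Ioi i, S (x i) (x j)

lemma V_cons {K : Type*} [Field K] {m : ℕ} (a : K) (w : Fin m → K) :
    V (Fin.cons a w : Fin (m + 1) → K) = (∏ c, S a (w c)) * V w := by
  unfold V
  rw [Fin.prod_univ_succ, Fin.prod_Ioi_zero]
  simp [Fin.prod_Ioi_succ]

lemma V_perm {K : Type*} [Field K] {m : ℕ} (x : Fin m → K) (σ : Equiv.Perm (Fin m)) :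
    V (x ∘ σ) = ((Equiv.Perm.sign σ : ℤ) : K) * V x :=
  Equiv.Perm.prod_Ioi_comp_eq_sign_mul_prod σ (f := fun i j => S (x i) (x j))
    (fun _ _ => S_antisymm _ _)

/-- The product over the standard matching. -/
noncomputable def Mt {K : Type*} [Field K] (n : ℕ) (x : Fin (2 * n) → K) : K :=
  ∏ i : Fin n, S (x ⟨2 * (i : ℕ), by have := i.isLt; omega⟩)
    (x ⟨2 * (i : ℕ) + 1, by have := i.isLt; omega⟩)

lemma Mt_cons {K : Type*} [Field K] (n : ℕ) (a b : K) (w : Fin (2 * n) → K) :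
    Mt (n + 1) (Fin.cons a (Fin.cons b w : Fin (2 * n + 1) → K) : Fin (2 * n + 1 + 1) → K)
      = S a b * Mt n w := by
  unfold Mt
  rw [Fin.prod_univ_succ]
  rfl

/-- The sign-free summand. -/
noncomputable def g {K : Type*} [Field K] (n : ℕ) (x : Fin (2 * n) → K) : K :=
  Mt n x * (V x)⁻¹

lemma g_cons {K : Type*} [Field K] (n : ℕ) (a b : K) (hab : S a b ≠ 0) (w : Fin (2 * n) → K) :
    g (n + 1) (Fin.cons a (Fin.cons b w : Fin (2 * n + 1) → K) : Fin (2 * n + 1 + 1) → K)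
      = g n w * ∏ c, ((S a (w c))⁻¹ * (S b (w c))⁻¹) := by
  unfold g
  rw [Mt_cons]
  have h : V (Fin.cons a (Fin.cons b w : Fin (2 * n + 1) → K) : Fin (2 * n + 1 + 1) → K) =
      (S a b * ∏ c, S a (w c)) * ((∏ c, S b (w c)) * V w) := by
    rw [V_cons, V_cons, Fin.prod_univ_succ]
    simp
  have h' : V (m := 2 * (n + 1)) (Fin.cons a (Fin.cons b w : Fin (2 * n + 1) → K) : Fin (2 * n + 1 + 1) → K) =
      (S a b * ∏ c, S a (w c)) * ((∏ c, S b (w c)) * V w) := h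
  rw [h', Finset.prod_mul_distrib, Finset.prod_inv_distrib, Finset.prod_inv_distrib]
  simp only [mul_inv]
  have : S a b * (S a b)⁻¹ = 1 := mul_inv_cancel₀ hab
  linear_combination (Mt n w * (∏ c, S a (w c))⁻¹ * (∏ c, S b (w c))⁻¹ * (V w)⁻¹) * this

/-- Genericity of the parameters. -/
def Good {K : Type*} [Field K] {m : ℕ} (x : Fin m → K) : Prop :=
  Function.Injective x ∧ (∀ i, x i ≠ 0) ∧ ∀ i j, i ≠ j → x i + x j ≠ 0

lemma Good.del {K : Type*} [Field K] {m : ℕ} {x : Fin (m + 1) → K} (hx : Good x)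
    (p : Fin (m + 1)) : Good (del x p) :=
  ⟨hx.1.comp (del_inj p), fun i => hx.2.1 _, fun i j hij => hx.2.2 _ _
    fun h => hij (del_inj p h)⟩

lemma Good.S_ne {K : Type*} [Field K] {m : ℕ} {x : Fin m → K} (hx : Good x)
    {i j : Fin m} (h : i ≠ j) : S (x i) (x j) ≠ 0 :=
  div_ne_zero (sub_ne_zero.2 fun e => h (hx.1 e).symm) (hx.2.2 _ _ h.symm)

lemma V_ne {K : Type*} [Field K] {m : ℕ} {x : Fin m → K} (hx : Good x) : V x ≠ 0 :=
  Finset.prod_ne_zero_iff.2 fun i _ => Finset.prod_ne_zero_iff.2 fun j hj =>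
    hx.S_ne (Finset.mem_Ioi.1 hj).ne

lemma sum_g {K : Type*} [Field K] [CharZero K] (n : ℕ) (x : Fin (2 * n) → K) (hx : Good x) :
    ∑ σ : Equiv.Perm (Fin (2 * n)), g n (x ∘ σ) = ((2 ^ n * n.factorial : ℕ) : K) := by
  induction n with
  | zero => simp [g, Mt, V]
  | succ n ih =>
    have key : ∀ x : Fin (2 * n + 1 + 1) → K, Good x →
        ∑ σ : Equiv.Perm (Fin (2 * n + 1 + 1)), g (n + 1) (x ∘ σ) =
          ((2 ^ (n + 1) * (n + 1).factorial : ℕ) : K) := by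
      intro x hx
      refine (sum_perm_succ (fun y : Fin (2 * n + 1 + 1) → K => g (n + 1) y) x).trans ?_
      have inner : ∀ p, ∑ τ : Equiv.Perm (Fin (2 * n + 1)),
          g (n + 1) (Fin.cons (x p) (del x p ∘ τ) : Fin (2 * n + 1 + 1) → K) =
            ((2 ^ n * n.factorial : ℕ) : K) := by
        intro p
        rw [sum_perm_succ (fun y => g (n + 1) (Fin.cons (x p) y : Fin (2 * n + 1 + 1) → K))]
        have e : ∀ q, ∑ ρ : Equiv.Perm (Fin (2 * n)),
            g (n + 1) (Fin.cons (x p) (Fin.cons (del x p q) (del (del x p) q ∘ ρ) :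
              Fin (2 * n + 1) → K) : Fin (2 * n + 1 + 1) → K) =
            ((2 ^ n * n.factorial : ℕ) : K) * ∏ c ∈ Finset.univ.erase q,
              ((S (x p) (del x p c))⁻¹ * (S (del x p q) (del x p c))⁻¹) := by
          intro q
          have hne : S (x p) (del x p q) ≠ 0 := hx.S_ne (del_ne p q).symm
          simp only [g_cons n _ _ hne]
          rw [prod_erase_del, ← ih _ ((hx.del p).del q), Finset.sum_mul]
          refine Finset.sum_congr rfl fun ρ _ => ?_
          congr 1
          exact Equiv.prod_comp ρ (fun c => (S (x p) (del (del x p) q c))⁻¹ *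
            (S (del x p q) (del (del x p) q c))⁻¹)
        simp only [e]
        rw [← Finset.mul_sum, row_id (by simp) (del x p) (hx.del p).1 (x p) (hx.del p).2.1, mul_one]
        · exact fun i => hx.2.2 _ _ (del_ne p i).symm
        · exact fun i => sub_ne_zero.2 fun e => (del_ne p i).symm (hx.1 e)
      simp only [inner]
      simp only [Finset.sum_const, Finset.card_univ, Fintype.card_fin, nsmul_eq_mul]
      rw [Nat.factorial_succ, pow_succ]
      push_cast
      ring
    exact key x hx


lemma prod_pairs {K : Type*} [Field K] (n : ℕ) (f : Fin (2 * n) → K) :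
    ∏ i : Fin n, (f ⟨2 * (i : ℕ), by have := i.isLt; omega⟩ *
      f ⟨2 * (i : ℕ) + 1, by have := i.isLt; omega⟩) = ∏ i, f i := by
  induction n with
  | zero => simp
  | succ n ih =>
    have key : ∀ f : Fin (2 * n + 1 + 1) → K,
      ∏ i : Fin (n + 1), (f ⟨2 * (i : ℕ), by have := i.isLt; omega⟩ *
        f ⟨2 * (i : ℕ) + 1, by have := i.isLt; omega⟩) = ∏ i, f i := by
      intro f
      rw [Fin.prod_univ_succ, Fin.prod_univ_succ (n := 2 * n + 1), Fin.prod_univ_succ (n := 2 * n),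
        ← ih, ← mul_assoc]
      rfl
    exact key f

theorem pf_schur {K : Type*} [Field K] [CharZero K] (n : ℕ) (x w : Fin (2 * n) → K)
    (hx : Good x) :
    pf n (fun i j => w i * w j * S (x i) (x j)) = (∏ i, w i) * V x := by
  unfold pf
  have hc : ((2 ^ n * n.factorial : ℕ) : K) ≠ 0 :=
    Nat.cast_ne_zero.2 (Nat.mul_ne_zero (by positivity) (Nat.factorial_ne_zero n))
  rw [inv_mul_eq_iff_eq_mul₀ hc, ← sum_g n x hx, Finset.sum_mul]
  refine Finset.sum_congr rfl fun σ _ => ?_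
  rw [Finset.prod_mul_distrib, prod_pairs n (fun i => w (σ i)), Equiv.prod_comp σ w]
  unfold g
  rw [V_perm]
  have hs : ((Equiv.Perm.sign σ : ℤ) : K) * ((Equiv.Perm.sign σ : ℤ) : K) = 1 := by
    rcases Int.units_eq_one_or (Equiv.Perm.sign σ) with h | h <;> simp [h]
  have hs0 : ((Equiv.Perm.sign σ : ℤ) : K) ≠ 0 := left_ne_zero_of_mul_eq_one hs
  have hs' : ((Equiv.Perm.sign σ : ℤ) : K)⁻¹ = ((Equiv.Perm.sign σ : ℤ) : K) :=
    (eq_inv_of_mul_eq_one_left hs).symm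
  have hV := V_ne hx
  rw [mul_inv, hs']
  change _ * ((∏ i, w i) * Mt n (x ∘ σ)) = _
  field_simp

lemma alg_ne {r : ℕ} (p : MvPolynomial (Option (Fin r)) ℚ) (v : Option (Fin r) → ℚ)
    (h : MvPolynomial.eval v p ≠ 0) :
    algebraMap (MvPolynomial (Option (Fin r)) ℚ) (K r) p ≠ 0 := by
  intro h0
  have : p = 0 := (IsFractionRing.injective (MvPolynomial (Option (Fin r)) ℚ) (K r))
    (by rw [h0, map_zero])
  exact h (by rw [this, map_zero])

lemma β_ne (r : ℕ) : β r ≠ 0 := alg_ne _ (fun _ => 1) (by simp)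

lemma t_ne {r : ℕ} (i : Fin r) : t i ≠ 0 := alg_ne _ (fun _ => 1) (by simp)

lemma u_ne {r : ℕ} (i : Fin r) : 1 + β r * t i ≠ 0 := by
  have := alg_ne (r := r) (1 + X none * X (some i)) (fun _ => 1) (by norm_num)
  simpa [β, t] using this

lemma two_ne {r : ℕ} (i : Fin r) : 2 + β r * t i ≠ 0 := by
  have := alg_ne (r := r) (C 2 + X none * X (some i)) (fun _ => 1) (by norm_num)
  have h2 : algebraMap (MvPolynomial (Option (Fin r)) ℚ) (K r) (C 2) = 2 := by
    rw [show (C 2 : MvPolynomial (Option (Fin r)) ℚ) = 2 from map_ofNat C 2]; exact map_ofNat _ 2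
  rwa [map_add, map_mul, h2] at this

lemma plus_ne {r : ℕ} (i j : Fin r) : t i + t j + β r * t i * t j ≠ 0 := by
  have := alg_ne (r := r) (X (some i) + X (some j) + X none * X (some i) * X (some j))
    (fun _ => 1) (by norm_num)
  simpa [β, t] using this

lemma sub_ne {r : ℕ} {i j : Fin r} (h : i ≠ j) : t j - t i ≠ 0 := by
  classical
  have := alg_ne (r := r) (X (some j) - X (some i))
    (fun o => if o = some j then 1 else 0) (by simp [h])
  simpa [t] using this

lemma field_S {F : Type*} [Field F] [CharZero F] (b x y : F) (hx : 2 + b * x ≠ 0)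
    (hy : 2 + b * y ≠ 0) :
    S (x / (2 + b * x)) (y / (2 + b * y)) = (y - x) / (x + y + b * x * y) := by
  unfold S
  rw [div_sub_div _ _ hy hx, div_add_div _ _ hy hx, div_div_div_cancel_right₀ (mul_ne_zero hy hx)]
  rw [show y * (2 + b * x) - (2 + b * y) * x = 2 * (y - x) by ring,
    show y * (2 + b * x) + (2 + b * y) * x = 2 * (x + y + b * x * y) by ring]
  exact mul_div_mul_left _ _ two_ne_zero

/-- The Schur variables. -/
noncomputable def z {r : ℕ} (i : Fin r) : K r := t i / (2 + β r * t i)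

lemma S_z {r : ℕ} (i j : Fin r) :
    S (z i) (z j) = (t j - t i) / (t i + t j + β r * t i * t j) :=
  field_S _ _ _ (two_ne i) (two_ne j)

lemma S_last {r : ℕ} (i : Fin r) : S (z i) (-(β r)⁻¹) = 1 + β r * t i := by
  have hb := β_ne r
  have h2 := two_ne i
  unfold S z
  have h : -(β r)⁻¹ + t i / (2 + β r * t i) = -2 / (β r * (2 + β r * t i)) := by
    field_simp; ring
  have h' : -(β r)⁻¹ - t i / (2 + β r * t i) =
      -2 * (1 + β r * t i) / (β r * (2 + β r * t i)) := by
    field_simp; ring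
  rw [h, h']
  field_simp

lemma tbar_fac {r : ℕ} (i j : Fin r) :
    1 - tbar i / tbar j = (t j - t i) / (t j * (1 + β r * t i)) := by
  have h1 := t_ne j
  have h2 := u_ne i
  have h3 := u_ne j
  unfold tbar
  rw [div_div_div_eq, eq_div_iff (mul_ne_zero h1 h2)]
  generalize hu : 1 + β r * t i = u at *
  generalize hv : 1 + β r * t j = v at *
  field_simp
  rw [← hu, ← hv]
  ring

lemma den_fac {r : ℕ} (i j : Fin r) :
    1 - t i / tbar j = (t i + t j + β r * t i * t j) / t j := by
  have h1 := t_ne j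
  have h3 := u_ne j
  unfold tbar
  field_simp
  ring

lemma den_ne {r : ℕ} (i j : Fin r) : 1 - t i / tbar j ≠ 0 := by
  rw [den_fac]; exact div_ne_zero (plus_ne i j) (t_ne j)

lemma ratio {r : ℕ} (i j : Fin r) :
    (1 - tbar i / tbar j) / (1 - t i / tbar j) = (1 + β r * t i)⁻¹ * S (z i) (z j) := by
  have h1 := t_ne j
  have h2 := u_ne i
  have h3 := plus_ne i j
  rw [tbar_fac, den_fac, S_z]
  field_simp

lemma good_z (r : ℕ) : Good (z : Fin r → K r) := by
  have hS : ∀ i j : Fin r, i ≠ j → S (z i) (z j) ≠ 0 := fun i j h => by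
    rw [S_z]; exact div_ne_zero (sub_ne h) (plus_ne i j)
  refine ⟨fun i j h => ?_, fun i => div_ne_zero (t_ne i) (two_ne i), fun i j h e => ?_⟩
  · by_contra hij
    apply hS i j hij
    unfold S; rw [h, sub_self, zero_div]
  · apply hS i j h
    unfold S; rw [add_comm (z j), e, div_zero]

lemma good_snoc (r : ℕ) : Good (Fin.snoc (α := fun _ => K r) (z : Fin r → K r) (-(β r)⁻¹)) := by
  have hg := good_z r
  have hl : ∀ i : Fin r, S (z i) (-(β r)⁻¹) ≠ 0 := fun i => by rw [S_last]; exact u_ne i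
  have h1 : ∀ i : Fin r, z i ≠ -(β r)⁻¹ := fun i h => hl i (by unfold S; rw [h, sub_self, zero_div])
  have h2 : ∀ i : Fin r, z i + -(β r)⁻¹ ≠ 0 := fun i h => hl i (by
    unfold S; rw [add_comm _ (z i), h, div_zero])
  have h3 : -(β r)⁻¹ ≠ 0 := neg_ne_zero.2 (inv_ne_zero (β_ne r))
  refine ⟨fun i j => ?_, fun i => ?_, fun i j => ?_⟩
  · refine Fin.lastCases ?_ (fun i => ?_) i <;> refine Fin.lastCases ?_ (fun j => ?_) j
    · simp
    · simp only [Fin.snoc_last, Fin.snoc_castSucc]; exact fun h => absurd h.symm (h1 j)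
    · simp only [Fin.snoc_last, Fin.snoc_castSucc]; exact fun h => absurd h (h1 i)
    · simp only [Fin.snoc_castSucc]; exact fun h => congrArg _ (hg.1 h)
  · refine Fin.lastCases ?_ (fun i => ?_) i
    · simpa using h3
    · simpa using hg.2.1 i
  · refine Fin.lastCases ?_ (fun i => ?_) i <;> refine Fin.lastCases ?_ (fun j => ?_) j
    · simp
    · simp only [Fin.snoc_last, Fin.snoc_castSucc]; rw [add_comm (-(β r)⁻¹) (z j)]; exact fun _ => h2 j
    · simp only [Fin.snoc_last, Fin.snoc_castSucc]; exact fun _ => h2 i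
    · simp only [Fin.snoc_castSucc]; exact fun h => hg.2.2 i j fun e => h (congrArg _ e)

lemma V_ite {F : Type*} [Field F] {m : ℕ} (x : Fin m → F) :
    V x = ∏ i, ∏ j, if i < j then S (x i) (x j) else 1 := by
  unfold V
  refine Finset.prod_congr rfl fun i _ => ?_
  rw [← Finset.prod_filter]
  congr 1
  ext j; simp

lemma V_snoc {F : Type*} [Field F] {m : ℕ} (x : Fin m → F) (a : F) :
    V (Fin.snoc (α := fun _ => F) x a) = V x * ∏ i, S (x i) a := by
  rw [V_ite, V_ite, Fin.prod_univ_castSucc]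
  simp only [Fin.prod_univ_castSucc, Fin.snoc_castSucc, Fin.snoc_last, Fin.castSucc_lt_castSucc_iff,
    Fin.castSucc_lt_last, if_true, lt_irrefl, if_false, Finset.prod_mul_distrib]
  have : ∀ i : Fin m, ¬ (Fin.last m < i.castSucc) := fun i => not_lt.2 (Fin.le_last _)
  simp [this]

lemma prod_Delta {F : Type*} [Field F] {m : ℕ} (f : Fin m → Fin m → F) :
    ∏ p ∈ Delta m, f p.1 p.2 = ∏ i, ∏ j ∈ Finset.Ioi i, f i j := by
  unfold Delta
  rw [Finset.prod_filter, ← Finset.univ_product_univ, Finset.prod_product]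
  refine Finset.prod_congr rfl fun i _ => ?_
  rw [← Finset.prod_filter]
  congr 1
  ext j; simp

/-- The row factor. -/
noncomputable def W {r : ℕ} (r' : ℕ) (lam : Fin r → ℕ) (I : Finset (Fin r × Fin r))
    (i : Fin r) : K r :=
  t i ^ ((lam i : ℤ) + dI I i) * (1 + β r * t i) ^ ((i : ℤ) + (cI I i : ℤ) + 1 - (r' : ℤ))

lemma tN_eq {r : ℕ} (i : Fin r) : tN r (i : ℕ) = t i := by simp [tN]
lemma tbarN_eq {r : ℕ} (i : Fin r) : tbarN r (i : ℕ) = tbar i := by simp [tbarN, tbar, tN_eq]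
lemma lamN_eq {r : ℕ} (lam : Fin r → ℕ) (i : Fin r) : lamN lam (i : ℕ) = lam i := by simp [lamN]

lemma Lam_inner {r : ℕ} (r' : ℕ) (lam : Fin r → ℕ) (I : Finset (Fin r × Fin r)) (i j : Fin r) :
    Lam r' lam I i j = W r' lam I i * W r' lam I j * S (z i) (z j) := by
  unfold Lam F W
  rw [if_pos j.isLt]
  simp only [tN_eq, tbarN_eq, lamN_eq]
  rw [ratio, show (i : ℤ) + (cI I i : ℤ) + 2 - (r' : ℤ) = (i : ℤ) + (cI I i : ℤ) + 1 - (r' : ℤ) + 1 by ring,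
    zpow_add_one₀ (u_ne i)]
  have := mul_inv_cancel₀ (u_ne i)
  generalize (1 + β r * t i)⁻¹ = q at *
  linear_combination (t i ^ ((lam i : ℤ) + dI I i) * t j ^ ((lam j : ℤ) + dI I j) *
    (1 + β r * t i) ^ ((i : ℤ) + (cI I i : ℤ) + 1 - (r' : ℤ)) *
    (1 + β r * t j) ^ ((j : ℤ) + (cI I j : ℤ) + 1 - (r' : ℤ)) * S (z i) (z j)) * this

lemma Lam_last {r : ℕ} (r' : ℕ) (lam : Fin r → ℕ) (I : Finset (Fin r × Fin r)) (i : Fin r) :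
    Lam r' lam I i r = W r' lam I i * S (z i) (-(β r)⁻¹) := by
  unfold Lam Fi W
  rw [if_neg (lt_irrefl _)]
  simp only [tN_eq, lamN_eq]
  rw [S_last, show (i : ℤ) + (cI I i : ℤ) + 2 - (r' : ℤ) = (i : ℤ) + (cI I i : ℤ) + 1 - (r' : ℤ) + 1 by ring,
    zpow_add_one₀ (u_ne i), mul_assoc]

lemma skew_eq {N : ℕ} {F : Type*} [Field F] (f : Fin N → Fin N → F) (w x : Fin N → F)
    (h : ∀ i j, i < j → f i j = w i * w j * S (x i) (x j)) :
    skew f = fun i j => w i * w j * S (x i) (x j) := by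
  funext i j
  unfold skew
  rcases lt_trichotomy i j with hij | hij | hij
  · rw [if_pos hij, h i j hij]
  · subst hij; simp [S]
  · rw [if_neg hij.not_gt, if_pos hij, h j i hij, S_antisymm (x i)]; ring

lemma pf_Lam {r : ℕ} (N : ℕ) (hN : 2 * N = r ∨ 2 * N = r + 1) (lam : Fin r → ℕ)
    (I : Finset (Fin r × Fin r)) :
    pf N (skew fun i j : Fin (2 * N) => Lam (2 * N) lam I (i : ℕ) (j : ℕ)) =
      (∏ i, W r lam I i) * V (z : Fin r → K r) := by
  rcases hN with hN | hN
  · subst hN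
    rw [skew_eq _ (W (2 * N) lam I) z (fun i j _ => Lam_inner _ _ _ i j), pf_schur N _ _ (good_z _)]
  · obtain ⟨M, rfl⟩ : ∃ M, N = M + 1 := ⟨N - 1, by omega⟩
    obtain rfl : r = 2 * M + 1 := by omega
    have h := skew_eq (N := 2 * M + 1 + 1)
      (fun i j => Lam (2 * (M + 1)) lam I (i : ℕ) (j : ℕ))
      (Fin.snoc (α := fun _ => K (2 * M + 1)) (W (2 * (M + 1)) lam I) 1)
      (Fin.snoc (α := fun _ => K (2 * M + 1)) z (-(β _)⁻¹)) (by
        intro i j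
        refine Fin.lastCases ?_ (fun i => ?_) i <;> refine Fin.lastCases ?_ (fun j => ?_) j
        · simp
        · intro h; exact absurd h (not_lt.2 (Fin.le_last _))
        · intro _
          simp only [Fin.snoc_last, Fin.snoc_castSucc, Fin.val_last, Fin.val_castSucc, mul_one]
          exact Lam_last _ _ _ i
        · intro _
          simp only [Fin.snoc_castSucc, Fin.val_castSucc]
          exact Lam_inner _ _ _ i j)
    have h' := pf_schur (M + 1) (Fin.snoc (α := fun _ => K (2 * M + 1)) z (-(β _)⁻¹))
      (Fin.snoc (α := fun _ => K (2 * M + 1)) (W (2 * (M + 1)) lam I) 1) (good_snoc _)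
    have e := (congrArg (pf (M + 1)) h).trans h'
    refine Eq.trans e ?_
    have hW : ∏ i : Fin (2 * M + 1 + 1),
        (Fin.snoc (α := fun _ => K (2 * M + 1)) (W (2 * (M + 1)) lam I) 1 :
          Fin (2 * M + 1 + 1) → K (2 * M + 1)) i = ∏ i, W (2 * (M + 1)) lam I i := by
      rw [Fin.prod_univ_castSucc]
      simp only [Fin.snoc_castSucc, Fin.snoc_last, mul_one]
    have hV : V (Fin.snoc (α := fun _ => K (2 * M + 1)) z (-(β (2 * M + 1))⁻¹)) =
        V (z : Fin (2 * M + 1) → K (2 * M + 1)) * ∏ i, (1 + β (2 * M + 1) * t i) :=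
      (V_snoc _ _).trans (congrArg (V z * ·) (Finset.prod_congr rfl fun i _ => S_last i))
    refine (congrArg₂ (· * ·) hW hV).trans ?_
    beta_reduce
    rw [mul_comm (V _), ← mul_assoc, ← Finset.prod_mul_distrib]
    congr 1
    refine Finset.prod_congr rfl fun i _ => ?_
    unfold W
    rw [mul_assoc, ← zpow_add_one₀ (u_ne i)]
    congr 2
    push_cast; ring

lemma prod_I {r : ℕ} (I : Finset (Fin r × Fin r)) :
    ∏ i : Fin r, (t i ^ dI I i * (1 + β r * t i) ^ (cI I i : ℤ)) =
      ∏ p ∈ I, (t p.1 * (t p.2)⁻¹ * (1 + β r * t p.2)) := by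
  classical
  have ha : ∀ f : Fin r → K r, ∏ i : Fin r, f i ^ aI I i = ∏ p ∈ I, f p.1 := fun f => by
    rw [← Finset.prod_fiberwise I (fun p => p.1)]
    refine Finset.prod_congr rfl fun i _ => ?_
    rw [Finset.prod_congr rfl (g := fun _ => f i)
      (fun p hp => by rw [(Finset.mem_filter.1 hp).2]), Finset.prod_const]
    unfold aI
    simp only [Fin.val_inj]
  have hc : ∀ f : Fin r → K r, ∏ i : Fin r, f i ^ cI I i = ∏ p ∈ I, f p.2 := fun f => by
    rw [← Finset.prod_fiberwise I (fun p => p.2)]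
    refine Finset.prod_congr rfl fun i _ => ?_
    rw [Finset.prod_congr rfl (g := fun _ => f i)
      (fun p hp => by rw [(Finset.mem_filter.1 hp).2]), Finset.prod_const]
    unfold cI
    simp only [Fin.val_inj]
  rw [Finset.prod_mul_distrib (s := I), Finset.prod_mul_distrib (s := I)]
  simp only [zpow_natCast]
  rw [← ha (fun i => t i), ← hc (fun i => (t i)⁻¹), ← hc (fun i => 1 + β r * t i)]
  rw [Finset.prod_mul_distrib]
  congr 1
  rw [← Finset.prod_mul_distrib]
  refine Finset.prod_congr rfl fun i _ => ?_
  unfold dI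
  rw [zpow_sub₀ (t_ne i), zpow_natCast, zpow_natCast, inv_pow, div_eq_mul_inv]

lemma prod_W {r : ℕ} (lam : Fin r → ℕ) (I : Finset (Fin r × Fin r)) :
    ∏ i, W r lam I i = (∏ i : Fin r, t i ^ lam i) * (∏ p ∈ Delta r, (1 + β r * t p.1)⁻¹) *
      ∏ p ∈ I, (t p.1 * (t p.2)⁻¹ * (1 + β r * t p.2)) := by
  rw [← prod_I, prod_Delta (fun i _ => (1 + β r * t i)⁻¹), ← Finset.prod_mul_distrib,
    ← Finset.prod_mul_distrib]
  refine Finset.prod_congr rfl fun i _ => ?_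
  unfold W
  rw [Finset.prod_const, Fin.card_Ioi, zpow_add₀ (t_ne i), zpow_natCast,
    show (i : ℤ) + (cI I i : ℤ) + 1 - (r : ℤ) = (cI I i : ℤ) + -((r - 1 - (i : ℕ) : ℕ) : ℤ) by
      have := i.isLt; omega,
    zpow_add₀ (u_ne i), zpow_neg, zpow_natCast _ (r - 1 - (i : ℕ)), inv_pow]
  ring

/-- (Pfaffian-sum expansion for a `k`-strict partition `λ` of length `r`,
with `r' = 2 * ((r+1)/2)` the smallest even integer `≥ r`.) -/
theorem stmt7 (k r : ℕ) (hr : 0 < r) (lam : Fin r → ℕ) (hpos : ∀ i, 0 < lam i)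
    (hanti : Antitone lam)
    (hstrict : ∀ i : Fin r, ∀ h : (i : ℕ) + 1 < r, k < lam i → lam ⟨(i : ℕ) + 1, h⟩ < lam i) :
    (∏ i : Fin r, t i ^ lam i) *
        (∏ p ∈ Delta r, (1 - tbar p.1 / tbar p.2)) /
        (∏ p ∈ Cset k lam, (1 - t p.1 / tbar p.2)) =
      ∑ I ∈ (Dset k lam).powerset,
        pf ((r + 1) / 2)
          (skew fun i j : Fin (2 * ((r + 1) / 2)) =>
            Lam (2 * ((r + 1) / 2)) lam I (i : ℕ) (j : ℕ)) := by
  have hterm : ∀ I ∈ (Dset k lam).powerset,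
      pf ((r + 1) / 2)
          (skew fun i j : Fin (2 * ((r + 1) / 2)) =>
            Lam (2 * ((r + 1) / 2)) lam I (i : ℕ) (j : ℕ)) =
        ((∏ i : Fin r, t i ^ lam i) * (∏ p ∈ Delta r, (1 + β r * t p.1)⁻¹) *
          V (z : Fin r → K r)) *
          ∏ p ∈ I, (t p.1 * (t p.2)⁻¹ * (1 + β r * t p.2)) := fun I _ => by
    rw [pf_Lam _ (by omega), prod_W]; ring
  rw [Finset.sum_congr rfl hterm, ← Finset.mul_sum, ← Finset.prod_one_add]
  have hD : ∀ p : Fin r × Fin r,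
      1 + t p.1 * (t p.2)⁻¹ * (1 + β r * t p.2) = 1 - t p.1 / tbar p.2 := fun p => by
    have := t_ne p.2
    rw [den_fac]; field_simp; ring
  simp only [hD]
  have hV : V (z : Fin r → K r) = ∏ p ∈ Delta r, S (z p.1) (z p.2) :=
    (prod_Delta (fun i j : Fin r => S (z i) (z j))).symm
  have hsplit : (∏ p ∈ Cset k lam, (1 - t p.1 / tbar p.2)) *
      ∏ p ∈ Dset k lam, (1 - t p.1 / tbar p.2) = ∏ p ∈ Delta r, (1 - t p.1 / tbar p.2) := by
    unfold Cset Dset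
    rw [← Finset.prod_filter_mul_prod_filter_not (Delta r)
      (fun p => 0 ≤ chi k lam p.1 + chi k lam p.2)]
    simp only [not_le]
  have hC : ∏ p ∈ Cset k lam, (1 - t p.1 / tbar p.2) ≠ 0 :=
    Finset.prod_ne_zero_iff.2 fun p _ => den_ne p.1 p.2
  rw [div_eq_iff hC, hV, mul_assoc _ (∏ p ∈ Dset k lam, _), mul_comm (∏ p ∈ Dset k lam, _), hsplit,
    mul_assoc, mul_assoc, ← Finset.prod_mul_distrib, ← Finset.prod_mul_distrib]
  congr 1
  refine Finset.prod_congr rfl fun p _ => ?_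
  rw [← mul_assoc, ← ratio, div_mul_cancel₀ _ (den_ne p.1 p.2)]

end Stmt7
end

section
/- Let λ = (λ_1 > … > λ_r > 0) be a strict partition and let r' be the smallest even integer with r' ≥ r. Then in the field of rational functions ℚ(β, t_1, …, t_r): t_1^{λ_1} ⋯ t_r^{λ_r} · ∏_{1≤i<j≤r} (1 − t̄_i/t̄_j)/(1 − t_i/t̄_j) = Pf( Λ_{i,j} )_{1≤i<j≤r'}, where: if r is even, Λ_{i,j} := t_i^{λ_i}(1+βt_i)^{−(r−i−1)} · t_j^{λ_j}(1+βt_j)^{−(r−j)} · (1 − t̄_i/t̄_j)/(1 − t_i/t̄_j); and if r is odd (so r' = r+1), Λ_{i,j} := t_i^{λ_i}(1+βt_i)^{−(r−i)} · t_j^{λ_j}(1+βt_j)^{−(r+1−j)} · (1 − t̄_i/t̄_j)/(1 − t_i/t̄_j) for 1 ≤ i < j ≤ r, and Λ_{i,r+1} := t_i^{λ_i}(1+βt_i)^{−(r−i)} for 1 ≤ i ≤ r. -/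
open MvPolynomial

namespace Stmt8

/-- The field of rational functions `ℚ(β, t_1, …, t_r)`. -/
abbrev K (r : ℕ) := FractionRing (MvPolynomial (Option (Fin r)) ℚ)

noncomputable def β (r : ℕ) : K r :=
  algebraMap (MvPolynomial (Option (Fin r)) ℚ) (K r) (X none)

noncomputable def t {r : ℕ} (i : Fin r) : K r :=
  algebraMap (MvPolynomial (Option (Fin r)) ℚ) (K r) (X (some i))

noncomputable def tN (r : ℕ) (i : ℕ) : K r := if h : i < r then t ⟨i, h⟩ else 0

/-- `t̄ = -t/(1+βt)`. -/
noncomputable def tbar {r : ℕ} (i : Fin r) : K r := -t i / (1 + β r * t i)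

noncomputable def tbarN (r : ℕ) (i : ℕ) : K r := -tN r i / (1 + β r * tN r i)

def lamN {r : ℕ} (lam : Fin r → ℕ) (i : ℕ) : ℕ := if h : i < r then lam ⟨i, h⟩ else 0

/-- `(1 - t̄_i/t̄_j)/(1 - t_i/t̄_j)`. -/
noncomputable def ratio (r : ℕ) (i j : ℕ) : K r :=
  (1 - tbarN r i / tbarN r j) / (1 - tN r i / tbarN r j)

/-- The Pfaffian entry `Λ_{i,j}` (`0`-indexed; the formulas of the statement are
`1`-indexed, so e.g. `-(r-i-1)` there becomes `i+2-r` here). -/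
noncomputable def Lam {r : ℕ} (lam : Fin r → ℕ) (i j : ℕ) : K r :=
  if Even r then
    tN r i ^ lamN lam i * (1 + β r * tN r i) ^ ((i : ℤ) + 2 - (r : ℤ)) *
      (tN r j ^ lamN lam j * (1 + β r * tN r j) ^ ((j : ℤ) + 1 - (r : ℤ))) * ratio r i j
  else if j < r then
    tN r i ^ lamN lam i * (1 + β r * tN r i) ^ ((i : ℤ) + 1 - (r : ℤ)) *
      (tN r j ^ lamN lam j * (1 + β r * tN r j) ^ ((j : ℤ) - (r : ℤ))) * ratio r i j
  else tN r i ^ lamN lam i * (1 + β r * tN r i) ^ ((i : ℤ) + 1 - (r : ℤ))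

/-- The skew-symmetric matrix determined by its above-diagonal entries. -/
def skew {N : ℕ} {K : Type*} [Field K] (f : Fin N → Fin N → K) : Fin N → Fin N → K :=
  fun i j => if i < j then f i j else if j < i then -f j i else 0

/-- The Pfaffian of a `2n × 2n` skew-symmetric matrix, via
`Pf(A) = (2^n n!)⁻¹ Σ_{σ ∈ S_{2n}} sgn(σ) ∏_{i=1}^{n} A_{σ(2i-1), σ(2i)}`. -/
noncomputable def pf {K : Type*} [Field K] (n : ℕ) (A : Fin (2 * n) → Fin (2 * n) → K) :
    K :=
  (((2 ^ n * n.factorial : ℕ) : K))⁻¹ *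
    ∑ σ : Equiv.Perm (Fin (2 * n)),
      ((Equiv.Perm.sign σ : ℤ) : K) *
        ∏ i : Fin n,
          A (σ ⟨2 * (i : ℕ), by have := i.isLt; omega⟩)
            (σ ⟨2 * (i : ℕ) + 1, by have := i.isLt; omega⟩)

/-- The Schur kernel. -/
def sk {F : Type*} [Field F] (a b : F) : F := (b - a) / (a + b)

theorem sk_anti {F : Type*} [Field F] (a b : F) : sk a b = - sk b a := by
  unfold sk
  rw [add_comm b a, ← neg_sub, neg_div]

theorem lagr {F ι : Type*} [Field F] [CharZero F] [DecidableEq ι] (s : Finset ι) (v : ι → F)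
    (hv : Set.InjOn v s) (h0 : ∀ i ∈ s, v i ≠ 0) (hs : Even s.card) :
    ∑ b ∈ s, ∏ c ∈ s.erase b, (v c + v b) / (v c - v b) = 0 := by
  classical
  rcases s.eq_empty_or_nonempty with rfl | hne
  · simp
  set P : Polynomial F := (∏ c ∈ s, (Polynomial.X + Polynomial.C (v c))) with hP
  set Q : Polynomial F := (∏ c ∈ s, (Polynomial.X - Polynomial.C (v c))) with hQ
  have mP : P.Monic := Polynomial.monic_prod_of_monic _ _ fun i _ => Polynomial.monic_X_add_C _
  have mQ : Q.Monic := Polynomial.monic_prod_of_monic _ _ fun i _ => Polynomial.monic_X_sub_C _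
  have dP : P.degree = s.card := by
    rw [hP, Polynomial.degree_prod]; simp
  have dQ : Q.degree = s.card := by
    rw [hQ, Polynomial.degree_prod]; simp
  have hd : (P - Q).degree < s.card := by
    rw [← dP]
    exact Polynomial.degree_sub_lt_left (by rw [dP, dQ]) mP.ne_zero
      (by rw [mP.leadingCoeff, mQ.leadingCoeff])
  have h := congrArg (Polynomial.eval 0) (Lagrange.eq_interpolate hv hd)
  rw [Lagrange.interpolate_apply, Polynomial.eval_finsetSum] at h
  have hl : (P - Q).eval 0 = 0 := by
    simp [hP, hQ, Polynomial.eval_prod, Finset.prod_neg, hs.neg_one_pow]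
  rw [hl] at h
  have hpr : ∏ c ∈ s, v c ≠ 0 := Finset.prod_ne_zero_iff.mpr h0
  have key : ∀ b ∈ s, Polynomial.eval 0 (Polynomial.C ((P - Q).eval (v b)) * Lagrange.basis s v b)
      = (2 * ∏ c ∈ s, v c) * ∏ c ∈ s.erase b, (v c + v b) / (v c - v b) := by
    intro b hb
    have hQ0 : Q.eval (v b) = 0 := by
      rw [hQ, Polynomial.eval_prod]
      exact Finset.prod_eq_zero hb (by simp)
    have hP0 : P.eval (v b) = 2 * v b * ∏ c ∈ s.erase b, (v b + v c) := by
      rw [hP, Polynomial.eval_prod, ← Finset.mul_prod_erase s _ hb]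
      simp; left; ring
    rw [Polynomial.eval_mul, Polynomial.eval_C, Polynomial.eval_sub, hQ0, hP0, Lagrange.basis,
      Polynomial.eval_prod, ← Finset.mul_prod_erase s _ hb, sub_zero, mul_assoc,
      ← Finset.prod_mul_distrib]
    rw [← mul_assoc, mul_assoc (2 * v b), ← Finset.prod_mul_distrib]
    congr 1
    refine Finset.prod_congr rfl fun c hc => ?_
    have hcb : v c - v b ≠ 0 := by
      rw [sub_ne_zero]
      intro h
      exact (Finset.mem_erase.mp hc).1 (hv (Finset.mem_erase.mp hc).2 hb h)
    have hbc : v b - v c ≠ 0 := by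
      rw [← neg_sub]; exact neg_ne_zero.mpr hcb
    simp only [Lagrange.basisDivisor, Polynomial.eval_mul, Polynomial.eval_C, Polynomial.eval_sub,
      Polynomial.eval_X]
    field_simp
    ring
  rw [Finset.sum_congr rfl key, ← Finset.mul_sum] at h
  have h2 : (2 * ∏ c ∈ s, v c) ≠ 0 := mul_ne_zero two_ne_zero hpr
  exact (mul_eq_zero.mp h.symm).resolve_left h2

theorem schur_sum {F ι : Type*} [Field F] [CharZero F] [DecidableEq ι] (s : Finset ι) (x : ι → F)
    (hx : Set.InjOn x s) (hadd : ∀ i ∈ s, ∀ j ∈ s, x i + x j ≠ 0) (hs : Even s.card)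
    (a : ι) (ha : a ∈ s) :
    ∑ b ∈ s.erase a, ∏ c ∈ (s.erase a).erase b, (sk (x a) (x c) * sk (x b) (x c))⁻¹ = 1 := by
  have hx0 : ∀ i ∈ s, x i ≠ 0 := fun i hi h => hadd i hi i hi (by rw [h, add_zero])
  set v : ι → F := Function.update x a (- x a) with hvdef
  have hva : v a = - x a := by simp [hvdef]
  have hvb : ∀ b, b ≠ a → v b = x b := fun b hb => by simp [hvdef, hb]
  have hinj : Set.InjOn v s := by
    intro i hi j hj hij
    by_cases h1 : i = a <;> by_cases h2 : j = a
    · rw [h1, h2]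
    · subst h1
      rw [hva, hvb j h2] at hij
      exact absurd (by rw [← hij]; ring) (hadd i ha j hj)
    · subst h2
      rw [hva, hvb i h1] at hij
      exact absurd (by rw [hij]; ring) (hadd i hi j ha)
    · rw [hvb i h1, hvb j h2] at hij
      exact hx hi hj hij
  have hv0 : ∀ i ∈ s, v i ≠ 0 := by
    intro i hi
    by_cases h1 : i = a
    · subst h1; rw [hva]; exact neg_ne_zero.mpr (hx0 i hi)
    · rw [hvb i h1]; exact hx0 i hi
  have W := lagr s v hinj hv0 hs
  rw [← Finset.add_sum_erase s _ ha] at W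
  have hsk : ∀ i ∈ s, ∀ j ∈ s, i ≠ j → sk (x i) (x j) ≠ 0 := by
    intro i hi j hj hij
    refine div_ne_zero (sub_ne_zero.mpr fun h => hij (hx hi hj h.symm)) (hadd i hi j hj)
  have t1 : ∏ c ∈ s.erase a, (v c + v a) / (v c - v a) = ∏ c ∈ s.erase a, sk (x a) (x c) := by
    refine Finset.prod_congr rfl fun c hc => ?_
    rw [hva, hvb c (Finset.mem_erase.mp hc).1, sk]
    congr 1 <;> ring
  have hA : ∏ c ∈ s.erase a, sk (x a) (x c) ≠ 0 :=
    Finset.prod_ne_zero_iff.mpr fun c hc => hsk a ha c (Finset.mem_erase.mp hc).2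
      (Finset.mem_erase.mp hc).1.symm
  have t2 : ∀ b ∈ s.erase a, ∏ c ∈ s.erase b, (v c + v b) / (v c - v b) =
      - ((∏ c ∈ s.erase a, sk (x a) (x c)) *
        ∏ c ∈ (s.erase a).erase b, (sk (x a) (x c) * sk (x b) (x c))⁻¹) := by
    intro b hb
    obtain ⟨hba, hbs⟩ := Finset.mem_erase.mp hb
    have hab : a ∈ s.erase b := Finset.mem_erase.mpr ⟨hba.symm, ha⟩
    rw [← Finset.mul_prod_erase (s.erase b) _ hab, ← Finset.mul_prod_erase (s.erase a) _ hb,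
      mul_assoc, ← Finset.prod_mul_distrib, Finset.erase_right_comm, hva, hvb b hba, ← neg_mul]
    congr 1
    · rw [sk, ← neg_div, ← neg_div_neg_eq]; congr 1 <;> ring
    · refine Finset.prod_congr rfl fun c hc => ?_
      obtain ⟨hcb, hc'⟩ := Finset.mem_erase.mp hc
      obtain ⟨hca, hcs⟩ := Finset.mem_erase.mp hc'
      have := hsk a ha c hcs hca.symm
      rw [mul_inv, ← mul_assoc, mul_inv_cancel₀ this, one_mul, hvb c hca, sk, inv_div,
        add_comm (x c)]
  rw [t1, Finset.sum_congr rfl t2, Finset.sum_neg_distrib, ← Finset.mul_sum] at W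
  have Weq := add_neg_eq_zero.mp W
  exact (mul_left_cancel₀ hA (by rw [mul_one]; exact Weq)).symm

/-- Auxiliary product. -/
def HH {F : Type*} [Field F] {m : ℕ} (y : Fin (m + 2) → F) : F :=
  ∏ c : Fin m, (sk (y 0) (y c.succ.succ) * sk (y 1) (y c.succ.succ))⁻¹

theorem HH_sum {F : Type*} [Field F] [CharZero F] {m : ℕ} (hm : Even m) (y : Fin (m + 2) → F)
    (hy : Function.Injective y) (hadd : ∀ i j, y i + y j ≠ 0) :
    ∑ k : Fin (m + 1), HH (y ∘ Equiv.swap 1 k.succ) = 1 := by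
  have h := schur_sum Finset.univ y hy.injOn (fun i _ j _ => hadd i j)
    (by simpa using hm.add (even_two)) 0 (Finset.mem_univ _)
  rw [← h]
  refine Finset.sum_nbij (fun k => k.succ) ?_ ?_ ?_ ?_
  · intro k _; simp
  · intro k _ l _ hkl; simpa using hkl
  · intro b hb
    obtain ⟨k, rfl⟩ := Fin.exists_succ_eq.mpr (by simpa using hb : b ≠ 0)
    exact ⟨k, by simp, rfl⟩
  · intro k _
    unfold HH
    have e0 : Equiv.swap (1 : Fin (m + 2)) k.succ 0 = 0 :=
      Equiv.swap_apply_of_ne_of_ne (by simp) (Fin.succ_ne_zero k).symm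
    simp only [Function.comp, e0, Equiv.swap_apply_left]
    refine Finset.prod_nbij (fun c => Equiv.swap 1 k.succ c.succ.succ) ?_ ?_ ?_ ?_
    · intro c _
      simp only [Finset.mem_erase, Finset.mem_univ, and_true]
      constructor
      · intro hc
        have := (Equiv.swap (1 : Fin (m + 2)) k.succ).injective
          (hc.trans (Equiv.swap_apply_left 1 k.succ).symm)
        rw [← Fin.succ_zero_eq_one] at this
        exact Fin.succ_ne_zero c (Fin.succ_injective _ this)
      · intro hc
        have := (Equiv.swap (1 : Fin (m + 2)) k.succ).injective (hc.trans e0.symm)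
        exact Fin.succ_ne_zero _ this
    · intro c _ d _ hcd
      have := (Equiv.swap (1 : Fin (m + 2)) k.succ).injective hcd
      exact Fin.succ_injective _ (Fin.succ_injective _ this)
    · intro b hb
      simp only [Finset.coe_erase, Finset.coe_univ, Set.mem_sdiff, Set.mem_univ, true_and,
        Set.mem_singleton_iff] at hb
      have h1 : Equiv.swap (1 : Fin (m + 2)) k.succ b ≠ 0 := by
        intro h
        exact hb.1 ((Equiv.swap (1 : Fin (m + 2)) k.succ).injective (h.trans e0.symm))
      obtain ⟨d, hd⟩ := Fin.exists_succ_eq.mpr h1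
      have h2 : d ≠ 0 := by
        rintro rfl
        rw [Fin.succ_zero_eq_one] at hd
        apply hb.2
        have := congrArg (Equiv.swap (1 : Fin (m + 2)) k.succ) hd
        rw [Equiv.swap_apply_left, Equiv.swap_apply_self] at this
        exact this.symm
      obtain ⟨c, rfl⟩ := Fin.exists_succ_eq.mpr h2
      exact ⟨c, by simp, by simp only [hd, Equiv.swap_apply_self]⟩
    · intro c _; rfl

theorem HH_perm_sum {F : Type*} [Field F] [CharZero F] {m : ℕ} (hm : Even m) (y : Fin (m + 2) → F)
    (hy : Function.Injective y) (hadd : ∀ i j, y i + y j ≠ 0) :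
    ∑ σ : Equiv.Perm (Fin (m + 2)), HH (y ∘ σ) = ((m + 2) * m.factorial : ℕ) := by
  have h1 : ∀ k : Fin (m + 1), ∑ σ : Equiv.Perm (Fin (m + 2)), HH (y ∘ σ) =
      ∑ σ : Equiv.Perm (Fin (m + 2)), HH ((y ∘ σ) ∘ Equiv.swap 1 k.succ) := by
    intro k
    exact (Fintype.sum_equiv (Equiv.mulRight (Equiv.swap 1 k.succ)) _ _ (fun σ => rfl)).symm
  have h2 : ((m + 1 : ℕ) : F) * ∑ σ : Equiv.Perm (Fin (m + 2)), HH (y ∘ σ) =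
      ((m + 2).factorial : ℕ) := by
    have : ((m + 1 : ℕ) : F) * ∑ σ : Equiv.Perm (Fin (m + 2)), HH (y ∘ σ) =
        ∑ k : Fin (m + 1), ∑ σ : Equiv.Perm (Fin (m + 2)), HH (y ∘ σ) := by simp
    rw [this, Finset.sum_congr rfl fun k _ => h1 k, Finset.sum_comm,
      Finset.sum_congr rfl fun (σ : Equiv.Perm (Fin (m + 2))) _ =>
        HH_sum hm (y ∘ σ) (hy.comp σ.injective) fun i j => hadd _ _]
    simp [Fintype.card_perm]
  have h3 : ((m + 1 : ℕ) : F) ≠ 0 := Nat.cast_ne_zero.mpr (Nat.succ_ne_zero m)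
  apply mul_left_cancel₀ h3
  rw [h2, ← Nat.cast_mul, Nat.factorial_succ, Nat.factorial_succ]
  congr 1; ring

/-- The Schur product. -/
def VV {F : Type*} [Field F] {N : ℕ} (x : Fin N → F) : F :=
  ∏ i, ∏ j ∈ Finset.Ioi i, sk (x i) (x j)

theorem VV_perm {F : Type*} [Field F] {N : ℕ} (x : Fin N → F) (σ : Equiv.Perm (Fin N)) :
    VV (x ∘ σ) = ((Equiv.Perm.sign σ : ℤ) : F) * VV x :=
  Equiv.Perm.prod_Ioi_comp_eq_sign_mul_prod σ (f := fun i j => sk (x i) (x j))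
    fun _ _ => sk_anti _ _

theorem VV_succ {F : Type*} [Field F] {N : ℕ} (x : Fin (N + 1) → F) :
    VV x = (∏ j : Fin N, sk (x 0) (x j.succ)) * VV (fun i => x i.succ) := by
  unfold VV
  rw [Fin.prod_univ_succ, Fin.prod_Ioi_zero]
  simp only [Fin.prod_Ioi_succ]

theorem VV_HH {F : Type*} [Field F] {m : ℕ} (x : Fin (m + 2) → F)
    (hx : ∀ i j, i ≠ j → sk (x i) (x j) ≠ 0) :
    sk (x 0) (x 1) * VV (fun i => x i.succ.succ) = VV x * HH x := by
  rw [VV_succ, VV_succ, Fin.prod_univ_succ, HH, Finset.prod_inv_distrib, Finset.prod_mul_distrib]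
  have e1 : ∏ c : Fin m, sk (x 0) (x c.succ.succ) ≠ 0 :=
    Finset.prod_ne_zero_iff.mpr fun c _ => hx _ _ (Fin.succ_ne_zero _).symm
  have e2 : ∏ c : Fin m, sk (x 1) (x c.succ.succ) ≠ 0 :=
    Finset.prod_ne_zero_iff.mpr fun c _ => hx _ _ (by
      rw [← Fin.succ_zero_eq_one]
      exact fun h => (Fin.succ_ne_zero c) (Fin.succ_injective _ h).symm)
  simp only [Fin.succ_zero_eq_one]
  field_simp

/-- The unnormalized Pfaffian summand. -/
def PP {F : Type*} [Field F] (n : ℕ) (x : Fin (2 * n) → F) : F :=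
  ∏ i : Fin n, sk (x ⟨2 * (i : ℕ), by have := i.isLt; omega⟩)
            (x ⟨2 * (i : ℕ) + 1, by have := i.isLt; omega⟩)

theorem PP_succ {F : Type*} [Field F] (n : ℕ) (x : Fin (2 * n + 2) → F) :
    PP (n + 1) x = sk (x 0) (x 1) * PP n (fun i => x i.succ.succ) := by
  unfold PP
  rw [Fin.prod_univ_succ]
  rfl

theorem schur_pf {F : Type*} [Field F] [CharZero F] (n : ℕ) : ∀ (x : Fin (2 * n) → F)
    (_ : Function.Injective x) (_ : ∀ i j, x i + x j ≠ 0),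
    ∑ σ : Equiv.Perm (Fin (2 * n)), ((Equiv.Perm.sign σ : ℤ) : F) * PP n (x ∘ σ) =
      ((2 ^ n * n.factorial : ℕ) : F) * VV x := by
  induction n with
  | zero =>
    intro x _ _
    have : ∀ σ : Equiv.Perm (Fin (2 * 0)), σ = 1 := fun σ => by ext i; exact i.elim0
    simp [PP, VV]
  | succ n ih =>
    intro x hx hadd
    change ∑ σ : Equiv.Perm (Fin (2 * n + 2)), ((Equiv.Perm.sign σ : ℤ) : F) * PP (n + 1) (x ∘ σ) =
      ((2 ^ (n + 1) * (n + 1).factorial : ℕ) : F) * VV (N := 2 * n + 2) x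
    change Fin (2 * n + 2) → F at x
    set S := ∑ σ : Equiv.Perm (Fin (2 * n + 2)), ((Equiv.Perm.sign σ : ℤ) : F) *
      PP (n + 1) (x ∘ σ) with hS
    have hsk : ∀ i j, i ≠ j → sk (x i) (x j) ≠ 0 := fun i j hij =>
      div_ne_zero (sub_ne_zero.mpr fun h => hij (hx h.symm)) (hadd i j)
    let E : Equiv.Perm (Fin (2 * n)) → Equiv.Perm (Fin (2 * n + 2)) := fun e =>
      Equiv.Perm.decomposeFin.symm (0, Equiv.Perm.decomposeFin.symm (0, e))
    have E0 : ∀ e, E e 0 = 0 := fun e => by simp [E]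
    have E1 : ∀ e, E e 1 = 1 := fun e => by simp [E]
    have E2 : ∀ e (i : Fin (2 * n)), E e i.succ.succ = (e i).succ.succ := fun e i => by simp [E]
    have Es : ∀ e, Equiv.Perm.sign (E e) = Equiv.Perm.sign e := fun e => by simp [E]
    have h1 : ∀ e, S = ∑ σ : Equiv.Perm (Fin (2 * n + 2)), ((Equiv.Perm.sign σ : ℤ) : F) *
        (sk (x (σ 0)) (x (σ 1)) * (((Equiv.Perm.sign e : ℤ) : F) *
          PP n ((fun i => x (σ i.succ.succ)) ∘ e))) := by
      intro e
      rw [hS]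
      refine (Fintype.sum_equiv (Equiv.mulRight (E e)) _ _ (fun σ => ?_)).symm
      rw [Equiv.coe_mulRight, PP_succ]
      simp only [Function.comp, Equiv.Perm.mul_apply, E0, E1, E2, map_mul, Es, Units.val_mul,
        Int.cast_mul]
      rw [mul_assoc, mul_left_comm (sk _ _)]
      rfl
    have h2 : (((2 * n).factorial : ℕ) : F) * S = ∑ σ : Equiv.Perm (Fin (2 * n + 2)),
        ((2 ^ n * n.factorial : ℕ) : F) * VV x * HH (x ∘ σ) := by
      have : (((2 * n).factorial : ℕ) : F) * S = ∑ e : Equiv.Perm (Fin (2 * n)), S := by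
        simp [Fintype.card_perm]
      rw [this, Finset.sum_congr rfl fun e _ => h1 e, Finset.sum_comm]
      refine Finset.sum_congr rfl fun σ _ => ?_
      rw [← Finset.mul_sum, ← Finset.mul_sum, ih (fun i => x (σ i.succ.succ))]
      · have := VV_HH (x ∘ σ) (fun i j hij => hsk _ _ (fun h => hij (σ.injective h)))
        rw [VV_perm] at this
        simp only [Function.comp] at this ⊢
        rw [mul_left_comm (sk _ _), this]
        have hs : ((Equiv.Perm.sign σ : ℤ) : F) * ((Equiv.Perm.sign σ : ℤ) : F) = 1 := by
          rw [← Int.cast_mul, ← Units.val_mul, Int.units_mul_self]; simp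
        linear_combination (((2 ^ n * n.factorial : ℕ) : F) * VV x *
          HH (x ∘ σ)) * hs
      · intro i j hij
        exact Fin.succ_injective _ (Fin.succ_injective _ (σ.injective (hx hij)))
      · intro i j; exact hadd _ _
    rw [← Finset.mul_sum, HH_perm_sum (even_two_mul n) x hx hadd] at h2
    have h3 : (((2 * n).factorial : ℕ) : F) ≠ 0 := Nat.cast_ne_zero.mpr (Nat.factorial_ne_zero _)
    apply mul_left_cancel₀ h3
    rw [h2, Nat.factorial_succ n, pow_succ]
    push_cast
    ring

theorem prod_pairs {F : Type*} [Field F] (n : ℕ) : ∀ g : Fin (2 * n) → F,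
    ∏ i : Fin n, (g ⟨2 * (i : ℕ), by have := i.isLt; omega⟩ *
      g ⟨2 * (i : ℕ) + 1, by have := i.isLt; omega⟩) = ∏ i, g i := by
  induction n with
  | zero => intro g; simp
  | succ n ih =>
    intro g
    change _ = ∏ i : Fin (2 * n + 2), g i
    rw [Fin.prod_univ_succ, Fin.prod_univ_succ, Fin.prod_univ_succ, ← mul_assoc, ← ih]
    rfl

theorem VV_range {F : Type*} [Field F] (N : ℕ) (x : ℕ → F) :
    VV (fun i : Fin N => x i) = ∏ j ∈ Finset.range N, ∏ i ∈ Finset.range j, sk (x i) (x j) := by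
  unfold VV
  rw [Finset.prod_comm' (t' := Finset.univ) (s' := fun j => Finset.Iio j) (by simp),
    ← Fin.prod_univ_eq_prod_range (fun j => ∏ i ∈ Finset.range j, sk (x i) (x j))]
  refine Finset.prod_congr rfl fun j _ => ?_
  refine Finset.prod_nbij (fun i => (i : ℕ)) ?_ ?_ ?_ ?_
  · intro i hi; simpa using hi
  · intro i _ k _ h; exact Fin.ext h
  · intro i hi
    simp only [Finset.coe_range, Set.mem_Iio] at hi
    exact ⟨⟨i, hi.trans j.isLt⟩, by simpa [Fin.lt_def] using hi, rfl⟩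
  · intro i _; rfl

theorem pf_main {F : Type*} [Field F] [CharZero F] (n : ℕ) (f : ℕ → ℕ → F) (c x : ℕ → F)
    (hx : ∀ i j, i < j → j < 2 * n → x i ≠ x j)
    (hadd : ∀ i j, i ≤ j → j < 2 * n → x i + x j ≠ 0)
    (hf : ∀ i j, i < j → j < 2 * n → f i j = c i * c j * sk (x i) (x j)) :
    pf n (skew fun i j : Fin (2 * n) => f i j) =
      (∏ i ∈ Finset.range (2 * n), c i) *
        ∏ j ∈ Finset.range (2 * n), ∏ i ∈ Finset.range j, sk (x i) (x j) := by
  have hsk : ∀ i j : Fin (2 * n), skew (fun i j : Fin (2 * n) => f i j) i j =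
      (c i * c j) * sk (x i) (x j) := by
    intro i j
    unfold skew
    split_ifs with h1 h2
    · exact hf i j h1 j.isLt
    · change - f j i = _
      rw [hf j i h2 i.isLt, sk_anti]; ring
    · have : i = j := le_antisymm (not_lt.mp h2) (not_lt.mp h1)
      subst this; simp [sk]
  unfold pf
  simp only [hsk, Finset.prod_mul_distrib]
  have hc : ∀ σ : Equiv.Perm (Fin (2 * n)),
      (∏ i : Fin n, c (σ ⟨2 * (i : ℕ), by have := i.isLt; omega⟩)) *
      (∏ i : Fin n, c (σ ⟨2 * (i : ℕ) + 1, by have := i.isLt; omega⟩)) =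
      ∏ i ∈ Finset.range (2 * n), c i := by
    intro σ
    rw [← Finset.prod_mul_distrib, prod_pairs n (fun i => c (σ i)),
      ← Fin.prod_univ_eq_prod_range]
    exact Equiv.prod_comp σ (fun i : Fin (2 * n) => c i)
  simp only [hc]
  have hS := schur_pf n (fun i : Fin (2 * n) => x i)
    (by
      intro i j hij
      rcases lt_trichotomy i j with h | h | h
      · exact absurd hij (hx i j h j.isLt)
      · exact h
      · exact absurd hij.symm (hx j i h i.isLt))
    (by
      intro i j
      rcases le_total i j with h | h
      · exact hadd i j h j.isLt
      · rw [add_comm]; exact hadd j i h i.isLt)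
  rw [← VV_range]
  have h3 : ((2 ^ n * n.factorial : ℕ) : F) ≠ 0 :=
    Nat.cast_ne_zero.mpr (mul_ne_zero (pow_ne_zero _ two_ne_zero) (Nat.factorial_ne_zero _))
  rw [inv_mul_eq_iff_eq_mul₀ h3, mul_left_comm, ← hS, Finset.mul_sum]
  refine Finset.sum_congr rfl fun σ _ => ?_
  rw [mul_left_comm]
  rfl

theorem prod_filter_range {F : Type*} [Field F] (r : ℕ) (g : ℕ → ℕ → F) :
    ∏ p ∈ Finset.univ.filter (fun p : Fin r × Fin r => p.1 < p.2), g (p.1 : ℕ) (p.2 : ℕ) =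
      ∏ j ∈ Finset.range r, ∏ i ∈ Finset.range j, g i j := by
  rw [Finset.prod_sigma']
  refine Finset.prod_nbij (fun p => ⟨(p.2 : ℕ), (p.1 : ℕ)⟩) ?_ ?_ ?_ ?_
  · intro p hp
    have : p.1 < p.2 := by simpa using hp
    simpa using this
  · rintro ⟨a, b⟩ _ ⟨a', b'⟩ _ h
    simp only [Sigma.mk.injEq, heq_eq_eq] at h
    exact Prod.ext (Fin.ext h.2) (Fin.ext h.1)
  · rintro ⟨j, i⟩ h
    have h' : j < r ∧ i < j := by simpa using h
    exact ⟨(⟨i, h'.2.trans h'.1⟩, ⟨j, h'.1⟩), by simpa using h'.2, rfl⟩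
  · intro p _; rfl

theorem prod_inv_zpow {F : Type*} [Field F] (u : ℕ → F) (hu : ∀ i, u i ≠ 0) (m : ℕ) :
    ∏ j ∈ Finset.range m, ∏ i ∈ Finset.range j, (u i)⁻¹ =
      ∏ i ∈ Finset.range m, (u i) ^ ((i : ℤ) + 1 - (m : ℤ)) := by
  induction m with
  | zero => simp
  | succ m ih =>
    rw [Finset.prod_range_succ, ih, Finset.prod_range_succ, ← Finset.prod_mul_distrib]
    have : u m ^ ((m : ℤ) + 1 - ((m + 1 : ℕ) : ℤ)) = 1 := by simp
    rw [this, mul_one]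
    refine Finset.prod_congr rfl fun i _ => ?_
    rw [← zpow_neg_one, ← zpow_add₀ (hu i)]
    congr 1; push_cast; ring

theorem alg_ne {r : ℕ} (p : MvPolynomial (Option (Fin r)) ℚ)
    (h : MvPolynomial.eval (fun _ => (1 : ℚ)) p ≠ 0) :
    algebraMap (MvPolynomial (Option (Fin r)) ℚ) (K r) p ≠ 0 := by
  intro h0
  have : p = 0 := (IsFractionRing.injective (MvPolynomial (Option (Fin r)) ℚ) (K r))
    (by rw [h0, map_zero])
  rw [this, map_zero] at h
  exact h rfl

theorem tN_of {r i : ℕ} (h : i < r) : tN r i = t ⟨i, h⟩ := by simp [tN, h]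

theorem β_ne (r : ℕ) : β r ≠ 0 := alg_ne _ (by simp)

theorem tN_ne {r i : ℕ} (h : i < r) : tN r i ≠ 0 := by
  rw [tN_of h]; exact alg_ne _ (by simp)

theorem u_ne (r i : ℕ) : 1 + β r * tN r i ≠ 0 := by
  by_cases h : i < r
  · rw [tN_of h]
    have := alg_ne (r := r) (1 + X none * X (some ⟨i, h⟩)) (by simp)
    simpa [β, t] using this
  · simp [tN, h]

theorem u2_ne (r i : ℕ) : 2 + β r * tN r i ≠ 0 := by
  by_cases h : i < r
  · rw [tN_of h]
    have := alg_ne (r := r) (2 + X none * X (some ⟨i, h⟩)) (by simp; norm_num)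
    rw [map_add, map_mul, map_ofNat] at this
    exact this
  · simp [tN, h]

theorem tadd_ne {r i j : ℕ} (hi : i < r) (hj : j < r) :
    tN r i + tN r j + β r * tN r i * tN r j ≠ 0 := by
  rw [tN_of hi, tN_of hj]
  have := alg_ne (r := r) (X (some ⟨i, hi⟩) + X (some ⟨j, hj⟩) +
    X none * X (some ⟨i, hi⟩) * X (some ⟨j, hj⟩)) (by simp; norm_num)
  simpa [β, t] using this

theorem tN_inj {r i j : ℕ} (hi : i < r) (hj : j < r) (h : tN r i = tN r j) : i = j := by
  rw [tN_of hi, tN_of hj] at h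
  have := IsFractionRing.injective (MvPolynomial (Option (Fin r)) ℚ) (K r) h
  have := MvPolynomial.X_injective this
  simpa using this

/-- Variables of the Schur Pfaffian. -/
noncomputable def xs (r i : ℕ) : K r := if i < r then β r * tN r i / (2 + β r * tN r i) else -1

theorem xs_of {r i : ℕ} (h : i < r) : xs r i = β r * tN r i / (2 + β r * tN r i) := by
  simp [xs, h]

theorem xs_ge {r i : ℕ} (h : ¬ i < r) : xs r i = -1 := by simp [xs, h]

theorem xs_sub {r i j : ℕ} (hi : i < r) (hj : j < r) : xs r j - xs r i =
    2 * β r * (tN r j - tN r i) / ((2 + β r * tN r i) * (2 + β r * tN r j)) := by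
  rw [xs_of hi, xs_of hj]
  have h1 := u2_ne r i
  have h2 := u2_ne r j
  field_simp
  ring

theorem xs_add {r i j : ℕ} (hi : i < r) (hj : j < r) : xs r i + xs r j =
    2 * β r * (tN r i + tN r j + β r * tN r i * tN r j) /
      ((2 + β r * tN r i) * (2 + β r * tN r j)) := by
  rw [xs_of hi, xs_of hj]
  have h1 := u2_ne r i
  have h2 := u2_ne r j
  field_simp
  ring

theorem sk_xs {r i j : ℕ} (hi : i < r) (hj : j < r) : sk (xs r i) (xs r j) =
    (tN r j - tN r i) / (tN r i + tN r j + β r * tN r i * tN r j) := by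
  rw [sk, xs_sub hi hj, xs_add hi hj]
  have h1 := u2_ne r i
  have h2 := u2_ne r j
  have h3 := β_ne r
  have h4 := tadd_ne hi hj
  field_simp

theorem sk_last {r i : ℕ} (hi : i < r) : sk (xs r i) (xs r r) = 1 + β r * tN r i := by
  rw [sk, xs_of hi, xs_ge (lt_irrefl r)]
  have h1 := u2_ne r i
  have e1 : (-1 - β r * tN r i / (2 + β r * tN r i)) =
    (-2 / (2 + β r * tN r i)) * (1 + β r * tN r i) := by field_simp; ring
  have e2 : (β r * tN r i / (2 + β r * tN r i) + -1) = -2 / (2 + β r * tN r i) := by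
    field_simp; ring
  rw [e1, e2]
  exact mul_div_cancel_left₀ _ (div_ne_zero (by norm_num) h1)

theorem ratio_eq {r i j : ℕ} (hi : i < r) (hj : j < r) : ratio r i j =
    sk (xs r i) (xs r j) * (1 + β r * tN r i)⁻¹ := by
  rw [sk_xs hi hj, ratio, tbarN, tbarN]
  have h1 := u_ne r i
  have h2 := u_ne r j
  have h3 := tN_ne hj
  have h4 := tadd_ne hi hj
  have e1 : 1 - -tN r i / (1 + β r * tN r i) / (-tN r j / (1 + β r * tN r j)) =
      (tN r j - tN r i) / (tN r j * (1 + β r * tN r i)) := by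
    rw [neg_div (1 + β r * tN r i), neg_div (1 + β r * tN r j), neg_div_neg_eq, div_div_div_eq,
      one_sub_div (mul_ne_zero h1 h3)]
    congr 1 <;> ring
  have e2 : 1 - tN r i / (-tN r j / (1 + β r * tN r j)) =
      (tN r i + tN r j + β r * tN r i * tN r j) / tN r j := by
    field_simp; ring
  rw [e1, e2]
  field_simp

theorem xs_ne {r i j : ℕ} (hij : i < j) (hj : j < r + 1) : xs r i ≠ xs r j := by
  have hi : i < r := by omega
  by_cases hj' : j < r
  · intro h
    have h0 : xs r j - xs r i = 0 := sub_eq_zero.mpr h.symm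
    rw [xs_sub hi hj'] at h0
    refine (div_ne_zero (mul_ne_zero (mul_ne_zero two_ne_zero (β_ne r)) ?_)
      (mul_ne_zero (u2_ne r i) (u2_ne r j))) h0
    rw [sub_ne_zero]
    intro h'
    exact hij.ne' (tN_inj hj' hi h')
  · rw [xs_ge hj', xs_of hi]
    intro h
    rw [div_eq_iff (u2_ne r i)] at h
    have h2 : (2 : K r) * (1 + β r * tN r i) = 0 := by linear_combination h
    exact mul_ne_zero two_ne_zero (u_ne r i) h2

theorem xs_add_ne {r i j : ℕ} (hij : i ≤ j) (hj : j < r + 1) : xs r i + xs r j ≠ 0 := by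
  by_cases hj' : j < r
  · have hi : i < r := by omega
    rw [xs_add hi hj']
    exact div_ne_zero (mul_ne_zero (mul_ne_zero two_ne_zero (β_ne r)) (tadd_ne hi hj'))
      (mul_ne_zero (u2_ne r i) (u2_ne r j))
  · rw [xs_ge hj']
    by_cases hi : i < r
    · rw [xs_of hi]
      intro h
      have h' := add_neg_eq_zero.mp h
      rw [div_eq_iff (u2_ne r i)] at h'
      have : (2 : K r) = 0 := by linear_combination -h'
      exact two_ne_zero this
    · rw [xs_ge hi]; norm_num

/-- For a strict partition `λ_1 > … > λ_r > 0`, with `r'` the smallest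
even integer `≥ r` (`r' = 2*((r+1)/2)`):
`t^λ ∏_{i<j} (1-t̄_i/t̄_j)/(1-t_i/t̄_j) = Pf(Λ_{i,j})_{1≤i<j≤r'}` in `ℚ(β,t)`. -/
theorem stmt8 (r : ℕ) (lam : Fin r → ℕ) (hpos : ∀ i, 0 < lam i) (hstrict : StrictAnti lam) :
    (∏ i : Fin r, t i ^ lam i) *
        ∏ p ∈ Finset.univ.filter (fun p : Fin r × Fin r => p.1 < p.2),
          ratio r (p.1 : ℕ) (p.2 : ℕ) =
      pf ((r + 1) / 2)
        (skew fun i j : Fin (2 * ((r + 1) / 2)) => Lam lam (i : ℕ) (j : ℕ)) := by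
  have hL1 : ∏ i : Fin r, t i ^ lam i = ∏ i ∈ Finset.range r, tN r i ^ lamN lam i := by
    rw [← Fin.prod_univ_eq_prod_range (fun i => tN r i ^ lamN lam i)]
    refine Finset.prod_congr rfl fun i _ => ?_
    simp [tN, lamN]
  have hL2 : ∏ j ∈ Finset.range r, ∏ i ∈ Finset.range j, ratio r i j =
      (∏ j ∈ Finset.range r, ∏ i ∈ Finset.range j, sk (xs r i) (xs r j)) *
      ∏ i ∈ Finset.range r, (1 + β r * tN r i) ^ ((i : ℤ) + 1 - (r : ℤ)) := by
    rw [← prod_inv_zpow (fun i => 1 + β r * tN r i) (u_ne r) r, ← Finset.prod_mul_distrib]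
    refine Finset.prod_congr rfl fun j hj => ?_
    rw [← Finset.prod_mul_distrib]
    refine Finset.prod_congr rfl fun i hi => ?_
    rw [Finset.mem_range] at hi hj
    exact ratio_eq (hi.trans hj) hj
  rw [hL1, prod_filter_range r (ratio r), hL2]
  by_cases hr : Even r
  · have hN : 2 * ((r + 1) / 2) = r := by
      obtain ⟨k, hk⟩ := hr; omega
    rw [pf_main ((r + 1) / 2) (Lam lam)
      (fun i => tN r i ^ lamN lam i * (1 + β r * tN r i) ^ ((i : ℤ) + 1 - (r : ℤ))) (xs r)
      (fun i j hij hj => xs_ne hij (by omega)) (fun i j hij hj => xs_add_ne hij (by omega)) ?_]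
    · rw [hN, Finset.prod_mul_distrib]; ring
    · intro i j hij hj
      rw [hN] at hj
      have hu := u_ne r i
      rw [Lam, if_pos hr, ratio_eq (hij.trans hj) hj,
        show (i : ℤ) + 2 - r = (i + 1 - r) + 1 by ring, zpow_add_one₀ hu]
      field_simp
  · have hN : 2 * ((r + 1) / 2) = r + 1 := by
      obtain ⟨k, hk⟩ := Nat.not_even_iff_odd.mp hr; omega
    rw [pf_main ((r + 1) / 2) (Lam lam)
      (fun i => if i < r then
        tN r i ^ lamN lam i * (1 + β r * tN r i) ^ ((i : ℤ) - (r : ℤ)) else 1) (xs r)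
      (fun i j hij hj => xs_ne hij (by omega)) (fun i j hij hj => xs_add_ne hij (by omega)) ?_]
    · rw [hN, Finset.prod_range_succ, Finset.prod_range_succ _ r, if_neg (lt_irrefl r), mul_one]
      have e1 : ∏ i ∈ Finset.range r, sk (xs r i) (xs r r) =
          ∏ i ∈ Finset.range r, (1 + β r * tN r i) :=
        Finset.prod_congr rfl fun i hi => sk_last (Finset.mem_range.mp hi)
      have e2 : ∏ i ∈ Finset.range r, (1 + β r * tN r i) ^ ((i : ℤ) + 1 - (r : ℤ)) =
          (∏ i ∈ Finset.range r, (1 + β r * tN r i) ^ ((i : ℤ) - (r : ℤ))) *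
            ∏ i ∈ Finset.range r, (1 + β r * tN r i) := by
        rw [← Finset.prod_mul_distrib]
        refine Finset.prod_congr rfl fun i _ => ?_
        rw [← zpow_add_one₀ (u_ne r i)]
        congr 1; ring
      have e3 : (∏ i ∈ Finset.range r, if i < r then
          tN r i ^ lamN lam i * (1 + β r * tN r i) ^ ((i : ℤ) - (r : ℤ)) else 1) =
          (∏ i ∈ Finset.range r, tN r i ^ lamN lam i) *
            ∏ i ∈ Finset.range r, (1 + β r * tN r i) ^ ((i : ℤ) - (r : ℤ)) := by
        rw [← Finset.prod_mul_distrib]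
        exact Finset.prod_congr rfl fun i hi => if_pos (Finset.mem_range.mp hi)
      rw [e1, e2, e3]
      ring
    · intro i j hij hj
      rw [hN] at hj
      have hi : i < r := by omega
      have hu := u_ne r i
      rw [Lam, if_neg hr]
      simp only [if_pos hi]
      have e : (1 + β r * tN r i) ^ ((i : ℤ) + 1 - (r : ℤ)) =
          (1 + β r * tN r i) ^ ((i : ℤ) - (r : ℤ)) * (1 + β r * tN r i) := by
        rw [← zpow_add_one₀ hu]; congr 1; ring
      by_cases hj' : j < r
      · rw [if_pos hj', if_pos hj', ratio_eq hi hj', e]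
        field_simp
      · have : j = r := by omega
        subst this
        rw [if_neg hj', if_neg hj', sk_last hi, e]
        ring

end Stmt8
end
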